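/- Let p ∈ (5/2, 3), T > 0, and Ω ⊆ ℝ³ either the whole space, a half-space, or a bounded C^{1,1} domain. Then there is a constant c such that for all u, v in X = P⊥W^{2,p}(𝕋;L^p(Ω)) ∩ P⊥W^{1,p}(𝕋;W^{2,p}(Ω)), ‖∇v · ∂ₜ∇u‖_{L^p(𝕋×Ω)} ≤ c‖v‖_X‖u‖_X. -/

import Mathlib

noncomputable section

open MeasureTheory ENNReal

abbrev E3 := EuclideanSpace ℝ (Fin 3)

/-- Spatial partial derivative `∂ᵢ f`. -/
def Dx (f : E3 → ℝ) (i : Fin 3) (x : E3) : ℝ :=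
  fderiv ℝ f x (EuclideanSpace.single i 1)

/-- Spatial second derivative `∂ⱼ∂ᵢ f`. -/
def DDx (f : E3 → ℝ) (i j : Fin 3) (x : E3) : ℝ :=
  fderiv ℝ (fun y => Dx f i y) x (EuclideanSpace.single j 1)

/-- Time derivative `∂ₜ u`. -/
def dt (u : ℝ → E3 → ℝ) : ℝ → E3 → ℝ := fun t x => deriv (fun s => u s x) t

/-- The measure on one period `[0,T) × Ω` of the time-space cylinder `𝕋 × Ω`. -/
def μT (T : ℝ) (Ω : Set E3) : Measure (ℝ × E3) :=
  (volume.restrict (Set.Ioc (0 : ℝ) T)).prod (volume.restrict Ω)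

/-- (An equivalent version of) the norm of the solution space
`X = P⊥W^{2,p}(𝕋;L^p(Ω)) ∩ P⊥W^{1,p}(𝕋;W^{2,p}(Ω))`: the sum of the `L^p` norms of
`∂ₜ²u` and of `∂ₜᵃ∂ₓᵅu` for `a ≤ 1`, `|α| ≤ 2`, computed in `ℝ≥0∞`. -/
def XnormE (p : ℝ≥0∞) (μ : Measure (ℝ × E3)) (u : ℝ → E3 → ℝ) : ℝ≥0∞ :=
  eLpNorm (fun z : ℝ × E3 => dt (dt u) z.1 z.2) p μ
  + eLpNorm (fun z : ℝ × E3 => u z.1 z.2) p μ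
  + ∑ i : Fin 3, eLpNorm (fun z : ℝ × E3 => Dx (u z.1) i z.2) p μ
  + ∑ i : Fin 3, ∑ j : Fin 3, eLpNorm (fun z : ℝ × E3 => DDx (u z.1) i j z.2) p μ
  + eLpNorm (fun z : ℝ × E3 => dt u z.1 z.2) p μ
  + ∑ i : Fin 3, eLpNorm (fun z : ℝ × E3 => dt (fun s y => Dx (u s) i y) z.1 z.2) p μ
  + ∑ i : Fin 3, ∑ j : Fin 3,
      eLpNorm (fun z : ℝ × E3 => dt (fun s y => DDx (u s) i j y) z.1 z.2) p μ

/-- A bounded domain with `C^{1,1}` boundary. -/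
def IsC11Domain (Ω : Set E3) : Prop :=
  IsOpen Ω ∧ IsConnected Ω ∧ Bornology.IsBounded Ω ∧
  ∀ x ∈ frontier Ω, ∃ (e : E3 ≃ₗᵢ[ℝ] E3) (ω : ℝ × ℝ → ℝ) (r : ℝ), 0 < r ∧
    ContDiff ℝ 1 ω ∧ (∃ K, LipschitzWith K (fderiv ℝ ω)) ∧
    Metric.ball x r ∩ Ω = {y ∈ Metric.ball x r | ω (e y 0, e y 1) < e y 2}

/-!
The estimate rests on two embeddings and Hölder's inequality. Averaging the fundamental theorem of
calculus over a truncated cone with vertex `x` bounds `|f x|` by an integral of `|f|` and `|∇f|`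
over that cone. By Minkowski's inequality this gives `W^{1,p}(Ω) ⊆ L^{2p}(Ω)` whenever
`dim < 2p`, for every `Ω` with the cone condition: the whole space, a half-space and, by compactness
of the boundary, a bounded `C^{1,1}` domain. In time, a function that lies in `L^p(𝕋; L^{2p}(Ω))`
together with its time derivative lies in `L^∞(𝕋; L^{2p}(Ω))`. Both `∇v` and `∂ₜ∇v` are in
`L^p(𝕋; W^{1,p}(Ω))`, hence `∇v ∈ L^∞(𝕋; L^{2p}(Ω))`, while `∂ₜ∇u ∈ L^p(𝕋; L^{2p}(Ω))`; the product
is then in `L^p`. These exponents, in place of the paper's `L³` and `L^{3p/(3-p)}`, only require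
`p > 3/2`.
-/

section Minkowski

variable {α β : Type*} [MeasurableSpace α] [MeasurableSpace β] {μ : Measure α} {ν : Measure β}

theorem exists_simpleFunc_lt_lintegral [SigmaFinite μ] {f : α → ℝ≥0∞} {c : ℝ≥0∞}
    (hc : c < ∫⁻ x, f x ∂μ) :
    ∃ φ : SimpleFunc α NNReal, (∀ x, (φ x : ℝ≥0∞) ≤ f x) ∧ ∫⁻ x, φ x ∂μ < ⊤ ∧
      c < ∫⁻ x, φ x ∂μ := by
  rw [lintegral_eq_nnreal, lt_iSup_iff] at hc
  obtain ⟨ψ, hψ⟩ := hc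
  obtain ⟨hψf, hcψ⟩ := lt_iSup_iff.1 hψ
  rw [← SimpleFunc.lintegral_eq_lintegral] at hcψ
  obtain ⟨φ, hφψ, hφ, hcφ⟩ := SimpleFunc.exists_lt_lintegral_simpleFunc_of_lt_lintegral hcψ
  exact ⟨φ, fun x => (ENNReal.coe_le_coe.2 (hφψ x)).trans (hψf x), hφ, hcφ⟩

theorem measurable_eLpNorm_section [SFinite ν] {ε : Type*} [ENorm ε] {f : α → β → ε}
    (hf : Measurable fun z : α × β => ‖f z.1 z.2‖ₑ) {q : NNReal} (hq : q ≠ 0) :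
    Measurable fun x => eLpNorm (f x) q ν := by
  simp only [eLpNorm_nnreal_eq_lintegral hq]
  exact (hf.pow_const _).lintegral_prod_right'.pow_const _

theorem lintegral_mul_rpow_le_lintegral_eLpNorm_mul [SFinite μ] [SFinite ν] {A : α → β → ℝ≥0∞}
    (hA : Measurable (Function.uncurry A)) {q : NNReal} (hq : 1 ≤ q) {φ : α → ℝ≥0∞}
    (hφ : Measurable φ) :
    ∫⁻ x, (∫⁻ t, A x t ∂ν) * φ x ^ (1 - (q : ℝ)⁻¹) ∂μ ≤
      (∫⁻ t, eLpNorm (fun x => A x t) q μ ∂ν) * (∫⁻ x, φ x ∂μ) ^ (1 - (q : ℝ)⁻¹) := by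
  have hq0 : q ≠ 0 := by positivity
  calc ∫⁻ x, (∫⁻ t, A x t ∂ν) * φ x ^ (1 - (q : ℝ)⁻¹) ∂μ
      = ∫⁻ t, ∫⁻ x, A x t * φ x ^ (1 - (q : ℝ)⁻¹) ∂μ ∂ν := by
        rw [← lintegral_lintegral_swap (by fun_prop)]
        exact lintegral_congr fun x => (lintegral_mul_const _ hA.of_uncurry_left).symm
    _ ≤ ∫⁻ t, eLpNorm (fun x => A x t) q μ * (∫⁻ x, φ x ∂μ) ^ (1 - (q : ℝ)⁻¹) ∂ν := by
        refine lintegral_mono fun t => ?_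
        have hholder := ENNReal.lintegral_mul_norm_pow_le (μ := μ) (f := fun x => A x t ^ (q : ℝ))
          (hA.of_uncurry_right.pow_const _).aemeasurable hφ.aemeasurable
          (by positivity) (sub_nonneg.2 (inv_le_one_of_one_le₀ hq)) (add_sub_cancel (q : ℝ)⁻¹ 1)
        simpa [eLpNorm_nnreal_eq_lintegral hq0, ENNReal.rpow_rpow_inv (NNReal.coe_ne_zero.2 hq0)]
          using hholder
    _ = _ := by
        refine lintegral_mul_const _ (measurable_eLpNorm_section (f := fun t x => A x t) ?_ hq0)
        exact hA.comp measurable_swap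

theorem eLpNorm_lintegral_le [SigmaFinite μ] [SFinite ν] {A : α → β → ℝ≥0∞}
    (hA : Measurable (Function.uncurry A)) {q : NNReal} (hq : 1 ≤ q) :
    eLpNorm (fun x => ∫⁻ t, A x t ∂ν) q μ ≤ ∫⁻ t, eLpNorm (fun x => A x t) q μ ∂ν := by
  have hq0 : (0 : ℝ) < q := by positivity
  rw [eLpNorm_nnreal_eq_lintegral (by positivity), one_div, ENNReal.rpow_inv_le_iff hq0]
  simp only [enorm_eq_self]
  refine le_of_forall_lt fun c hc => ?_
  obtain ⟨φ, hφA, hφ, hcφ⟩ := exists_simpleFunc_lt_lintegral hc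
  refine hcφ.trans_le ((ENNReal.rpow_inv_le_iff hq0).1 ?_)
  set I := ∫⁻ x, (φ x : ℝ≥0∞) ∂μ
  have hI0 : I ≠ 0 := (bot_le.trans_lt hcφ).ne'
  have hθ : 0 ≤ 1 - (q : ℝ)⁻¹ := sub_nonneg.2 (inv_le_one_of_one_le₀ hq)
  have hsplit (J : ℝ≥0∞) : J ^ (q : ℝ)⁻¹ * J ^ (1 - (q : ℝ)⁻¹) = J := by
    rw [← ENNReal.rpow_add_of_nonneg _ _ (by positivity) hθ, add_sub_cancel, ENNReal.rpow_one]
  have hIθ0 : I ^ (1 - (q : ℝ)⁻¹) ≠ 0 := by simp [ENNReal.rpow_eq_zero_iff, hI0, hφ.ne]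
  have hIθ_top : I ^ (1 - (q : ℝ)⁻¹) ≠ ⊤ := ENNReal.rpow_ne_top_of_nonneg hθ hφ.ne
  rw [← ENNReal.mul_le_mul_iff_left hIθ0 hIθ_top, hsplit]
  calc I = ∫⁻ x, (φ x : ℝ≥0∞) ^ (q : ℝ)⁻¹ * (φ x : ℝ≥0∞) ^ (1 - (q : ℝ)⁻¹) ∂μ := by
        simp only [hsplit, I]
    _ ≤ ∫⁻ x, (∫⁻ t, A x t ∂ν) * (φ x : ℝ≥0∞) ^ (1 - (q : ℝ)⁻¹) ∂μ :=
        lintegral_mono fun x => mul_le_mul_left ((ENNReal.rpow_inv_le_iff hq0).2 (hφA x)) _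
    _ ≤ _ := lintegral_mul_rpow_le_lintegral_eLpNorm_mul hA hq (by fun_prop)

end Minkowski

section LpNorms

variable {α β ε : Type*} [MeasurableSpace α] [MeasurableSpace β] [ENorm ε] {μ : Measure α}
  {ν : Measure β}

theorem eLpNorm_le_eLpNorm_top_rpow_mul_eLpNorm_rpow {f : α → ε}
    (hf : AEMeasurable (fun x => ‖f x‖ₑ) μ) {p q : NNReal} (hp : p ≠ 0) (hpq : p ≤ q) :
    eLpNorm f q μ ≤ eLpNorm f ⊤ μ ^ (1 - p / q : ℝ) * eLpNorm f p μ ^ (p / q : ℝ) := by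
  have hp0 : (0 : ℝ) < p := by positivity
  have hq0 : (0 : ℝ) < q := hp0.trans_le hpq
  have hpq' : (0 : ℝ) ≤ q - p := sub_nonneg.2 hpq
  rw [eLpNorm_nnreal_eq_lintegral hp, eLpNorm_nnreal_eq_lintegral (NNReal.coe_pos.1 hq0).ne',
    one_div, ENNReal.rpow_inv_le_iff hq0, ENNReal.mul_rpow_of_nonneg _ _ hq0.le,
    ← ENNReal.rpow_mul, ← ENNReal.rpow_mul, ← ENNReal.rpow_mul, sub_mul, one_mul,
    div_mul_cancel₀ _ hq0.ne', one_div, inv_mul_cancel₀ hp0.ne', ENNReal.rpow_one,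
    ← lintegral_const_mul'' _ (hf.pow_const _)]
  refine lintegral_mono_ae ?_
  filter_upwards [enorm_ae_le_eLpNormEssSup f μ] with x hx
  calc ‖f x‖ₑ ^ (q : ℝ) = ‖f x‖ₑ ^ (q - p : ℝ) * ‖f x‖ₑ ^ (p : ℝ) := by
        rw [← ENNReal.rpow_add_of_nonneg _ _ hpq' hp0.le, sub_add_cancel]
    _ ≤ _ := by rw [eLpNorm_exponent_top]; gcongr

theorem eLpNorm_prod_eq [SFinite ν] {f : α → β → ε}
    (hf : Measurable fun z : α × β => ‖f z.1 z.2‖ₑ) {p : NNReal} (hp : p ≠ 0) :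
    eLpNorm (fun z : α × β => f z.1 z.2) p (μ.prod ν) =
      eLpNorm (fun x => eLpNorm (f x) p ν) p μ := by
  have hp0 : (p : ℝ) ≠ 0 := NNReal.coe_ne_zero.2 hp
  simp only [eLpNorm_nnreal_eq_lintegral hp, one_div, enorm_eq_self, ENNReal.rpow_inv_rpow hp0]
  rw [lintegral_prod _ (hf.pow_const _).aemeasurable]

end LpNorms

section DilatedIntegral

variable {E : Type*} [NormedAddCommGroup E] [NormedSpace ℝ E] [MeasurableSpace E]

/-- The integral of `g` over the translated and dilated set `x + τ • B`, up to the Jacobian of the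
dilation. For a ball `B`, these are the slices of a truncated cone with vertex `x`. -/
def dilatedIntegral (μ : Measure E) (B : Set E) (g : E → ℝ≥0∞) (τ : ℝ) (x : E) : ℝ≥0∞ :=
  ∫⁻ h in B, g (x + τ • h) ∂μ

variable [FiniteDimensional ℝ E] [BorelSpace E] {μ : Measure E} [μ.IsAddHaarMeasure] {B : Set E}
  {g : E → ℝ≥0∞} {p q : NNReal}

theorem measurable_dilatedIntegral (hg : Measurable g) :
    Measurable fun z : E × ℝ => dilatedIntegral μ B g z.2 z.1 :=
  Measurable.lintegral_prod_right' (f := fun z : (E × ℝ) × E => g (z.1.1 + z.1.2 • z.2))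
    (by fun_prop)

theorem eLpNorm_comp_add_smul (hg : Measurable g) {τ : ℝ} (hτ : 0 < τ) (x : E) :
    eLpNorm (fun h => g (x + τ • h)) p μ =
      ENNReal.ofReal (τ ^ (-(Module.finrank ℝ E : ℝ) / p)) * eLpNorm g p μ := by
  have hg_translate : Measurable fun y => g (x + y) := by fun_prop
  have hscale : eLpNorm (fun h => g (x + τ • h)) p μ =
      eLpNorm (fun y => g (x + y)) p (μ.map (τ • ·)) := by
    rw [eLpNorm_map_measure hg_translate.aestronglyMeasurable (by fun_prop),
      Function.comp_def]
  have htranslate : eLpNorm (fun y => g (x + y)) p μ = eLpNorm g p μ :=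
    eLpNorm_comp_measurePreserving hg.aestronglyMeasurable (measurePreserving_add_left μ x)
  rw [hscale, Measure.map_addHaar_smul μ hτ.ne',
    eLpNorm_smul_measure_of_ne_top ENNReal.coe_ne_top, htranslate, smul_eq_mul]
  congr 1
  rw [abs_of_pos (by positivity), ENNReal.ofReal_rpow_of_pos (by positivity), ← Real.rpow_natCast,
    ← Real.rpow_neg hτ.le, ← Real.rpow_mul hτ.le]
  simp [div_eq_mul_inv]

theorem dilatedIntegral_le (hg : Measurable g) (hp : 1 ≤ p) {τ : ℝ} (hτ : 0 < τ) (x : E) :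
    dilatedIntegral μ B g τ x ≤
      ENNReal.ofReal (τ ^ (-(Module.finrank ℝ E : ℝ) / p)) * eLpNorm g p μ *
        μ B ^ (1 - (p : ℝ)⁻¹) := by
  have hmeas : Measurable fun h => g (x + τ • h) := by fun_prop
  calc dilatedIntegral μ B g τ x = eLpNorm (fun h => g (x + τ • h)) 1 (μ.restrict B) := by
        simp [dilatedIntegral, eLpNorm_one_eq_lintegral_enorm]
    _ ≤ eLpNorm (fun h => g (x + τ • h)) p (μ.restrict B) * μ B ^ (1 - (p : ℝ)⁻¹) := by
        simpa using eLpNorm_le_eLpNorm_mul_rpow_measure_univ (μ := μ.restrict B)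
          (ENNReal.one_le_coe_iff.2 hp) hmeas.aestronglyMeasurable
    _ ≤ _ := by
        rw [← eLpNorm_comp_add_smul hg hτ x]
        gcongr
        exact Measure.restrict_le_self

theorem eLpNorm_dilatedIntegral_le_same (hg : Measurable g) (hp : 1 ≤ p) (τ : ℝ) :
    eLpNorm (dilatedIntegral μ B g τ) p μ ≤ μ B * eLpNorm g p μ := by
  refine (eLpNorm_lintegral_le (A := fun x h => g (x + τ • h)) (by fun_prop) hp).trans_eq ?_
  have htranslate (h : E) : eLpNorm (fun x => g (x + τ • h)) p μ = eLpNorm g p μ :=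
    eLpNorm_comp_measurePreserving hg.aestronglyMeasurable (measurePreserving_add_right μ _)
  simp [htranslate, mul_comm]

theorem eLpNorm_dilatedIntegral_le (hg : Measurable g) (hp : 1 ≤ p) (hpq : p ≤ q) {τ : ℝ}
    (hτ : 0 < τ) :
    eLpNorm (dilatedIntegral μ B g τ) q μ ≤
      ENNReal.ofReal (τ ^ (-(Module.finrank ℝ E * ((p : ℝ)⁻¹ - (q : ℝ)⁻¹)))) *
        μ B ^ (1 - ((p : ℝ)⁻¹ - (q : ℝ)⁻¹)) * eLpNorm g p μ := by
  have hp0 : (0 : ℝ) < p := by positivity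
  have hq0 : (0 : ℝ) < q := hp0.trans_le hpq
  have hpq1 : (0 : ℝ) ≤ 1 - p / q := sub_nonneg.2 ((div_le_one hq0).2 hpq)
  have hsup : eLpNorm (dilatedIntegral μ B g τ) ⊤ μ ≤
      ENNReal.ofReal (τ ^ (-(Module.finrank ℝ E : ℝ) / p)) * eLpNorm g p μ *
        μ B ^ (1 - (p : ℝ)⁻¹) := by
    rw [eLpNorm_exponent_top]
    exact eLpNormEssSup_le_of_ae_enorm_bound (.of_forall fun x => dilatedIntegral_le hg hp hτ x)
  calc eLpNorm (dilatedIntegral μ B g τ) q μ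
      ≤ eLpNorm (dilatedIntegral μ B g τ) ⊤ μ ^ (1 - p / q : ℝ) *
          eLpNorm (dilatedIntegral μ B g τ) p μ ^ (p / q : ℝ) :=
        eLpNorm_le_eLpNorm_top_rpow_mul_eLpNorm_rpow
          ((measurable_dilatedIntegral hg).comp measurable_prodMk_right).aemeasurable
          (by positivity) hpq
    _ ≤ (ENNReal.ofReal (τ ^ (-(Module.finrank ℝ E : ℝ) / p)) * eLpNorm g p μ *
          μ B ^ (1 - (p : ℝ)⁻¹)) ^ (1 - p / q : ℝ) * (μ B * eLpNorm g p μ) ^ (p / q : ℝ) := by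
        gcongr
        exact eLpNorm_dilatedIntegral_le_same hg hp τ
    _ = ENNReal.ofReal (τ ^ (-(Module.finrank ℝ E : ℝ) / p)) ^ (1 - p / q : ℝ) *
          (μ B ^ ((1 - (p : ℝ)⁻¹) * (1 - p / q : ℝ)) * μ B ^ (p / q : ℝ)) *
          (eLpNorm g p μ ^ (1 - p / q : ℝ) * eLpNorm g p μ ^ (p / q : ℝ)) := by
        rw [ENNReal.mul_rpow_of_nonneg _ _ hpq1, ENNReal.mul_rpow_of_nonneg _ _ hpq1,
          ENNReal.mul_rpow_of_nonneg _ _ (by positivity), ← ENNReal.rpow_mul]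
        ring
    _ = _ := by
        have hτ_exponent : -(Module.finrank ℝ E : ℝ) / p * (1 - p / q) =
            -(Module.finrank ℝ E * ((p : ℝ)⁻¹ - (q : ℝ)⁻¹)) := by
          field_simp
        have hB_exponent : (1 - (p : ℝ)⁻¹) * (1 - p / q) + p / q =
            1 - ((p : ℝ)⁻¹ - (q : ℝ)⁻¹) := by
          field_simp
          ring
        have hp1 : 0 ≤ 1 - (p : ℝ)⁻¹ := sub_nonneg.2 (inv_le_one_of_one_le₀ hp)
        rw [ENNReal.ofReal_rpow_of_pos (by positivity), ← Real.rpow_mul hτ.le,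
          ← ENNReal.rpow_add_of_nonneg _ _ (by positivity) (by positivity),
          ← ENNReal.rpow_add_of_nonneg _ _ hpq1 (by positivity), sub_add_cancel, ENNReal.rpow_one,
          hτ_exponent, hB_exponent]

theorem lintegral_ofReal_rpow_ne_top {s : ℝ} (hs : -1 < s) :
    ∫⁻ τ in Set.Ioc (0 : ℝ) 1, ENNReal.ofReal (τ ^ s) ≠ ⊤ :=
  ((intervalIntegral.intervalIntegrable_rpow' hs).1.lintegral_lt_top).ne

theorem exists_eLpNorm_lintegral_dilatedIntegral_le (μ : Measure E) [μ.IsAddHaarMeasure]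
    (hB : μ B ≠ ⊤) (hp : 1 ≤ p) (hpq : p ≤ q)
    (hd : Module.finrank ℝ E * ((p : ℝ)⁻¹ - (q : ℝ)⁻¹) < 1) :
    ∃ C : NNReal, ∀ g : E → ℝ≥0∞, Measurable g →
      eLpNorm (fun x => ∫⁻ τ in Set.Ioc (0 : ℝ) 1, dilatedIntegral μ B g τ x) q μ ≤
        C * eLpNorm g p μ := by
  have hb : μ B ^ (1 - ((p : ℝ)⁻¹ - (q : ℝ)⁻¹)) ≠ ⊤ := by
    refine ENNReal.rpow_ne_top_of_nonneg ?_ hB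
    have : (p : ℝ)⁻¹ ≤ 1 := inv_le_one_of_one_le₀ hp
    have : 0 ≤ (q : ℝ)⁻¹ := by positivity
    linarith
  lift μ B ^ (1 - ((p : ℝ)⁻¹ - (q : ℝ)⁻¹)) to NNReal using hb with b hbB
  lift ∫⁻ τ in Set.Ioc (0 : ℝ) 1,
      ENNReal.ofReal (τ ^ (-(Module.finrank ℝ E * ((p : ℝ)⁻¹ - (q : ℝ)⁻¹)))) to NNReal
    using lintegral_ofReal_rpow_ne_top (neg_lt_neg hd) with K hK
  refine ⟨K * b, fun g hg => ?_⟩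
  calc eLpNorm (fun x => ∫⁻ τ in Set.Ioc (0 : ℝ) 1, dilatedIntegral μ B g τ x) q μ
      ≤ ∫⁻ τ in Set.Ioc (0 : ℝ) 1, eLpNorm (dilatedIntegral μ B g τ) q μ :=
        eLpNorm_lintegral_le (measurable_dilatedIntegral hg) (hp.trans hpq)
    _ ≤ ∫⁻ τ in Set.Ioc (0 : ℝ) 1,
          ENNReal.ofReal (τ ^ (-(Module.finrank ℝ E * ((p : ℝ)⁻¹ - (q : ℝ)⁻¹)))) *
            (b * eLpNorm g p μ) := by
        refine setLIntegral_mono' measurableSet_Ioc fun τ hτ => ?_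
        rw [← mul_assoc, hbB]
        exact eLpNorm_dilatedIntegral_le hg hp hpq hτ.1
    _ = K * b * eLpNorm g p μ := by
        rw [lintegral_mul_const _ (by fun_prop), ← hK, mul_assoc]

/-- The bound for `‖f x‖` obtained by averaging the fundamental theorem of calculus over the
segments from `x` to the points of `x + B`, when `g₀` and `g₁` are the norms of `f` and of its
derivative and `R` bounds the norm on `B`. -/
def coneMajorant (μ : Measure E) (B : Set E) (R : NNReal) (g₀ g₁ : E → ℝ≥0∞) (x : E) : ℝ≥0∞ :=
  (μ B)⁻¹ * (dilatedIntegral μ B g₀ 1 x +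
    R * ∫⁻ τ in Set.Ioc (0 : ℝ) 1, dilatedIntegral μ B g₁ τ x)

theorem measurable_coneMajorant {g₀ g₁ : E → ℝ≥0∞} (hg₀ : Measurable g₀) (hg₁ : Measurable g₁)
    (R : NNReal) : Measurable (coneMajorant μ B R g₀ g₁) := by
  have hend : Measurable (dilatedIntegral μ B g₀ 1) :=
    (measurable_dilatedIntegral hg₀).comp measurable_prodMk_right
  have hcone : Measurable fun x => ∫⁻ τ in Set.Ioc (0 : ℝ) 1, dilatedIntegral μ B g₁ τ x :=
    (measurable_dilatedIntegral hg₁).lintegral_prod_right'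
  exact (hend.add (hcone.const_mul _)).const_mul _

theorem exists_eLpNorm_coneMajorant_le (μ : Measure E) [μ.IsAddHaarMeasure] (hB0 : μ B ≠ 0)
    (hB_top : μ B ≠ ⊤) (R : NNReal) (hp : 1 ≤ p) (hpq : p ≤ q)
    (hd : Module.finrank ℝ E * ((p : ℝ)⁻¹ - (q : ℝ)⁻¹) < 1) :
    ∃ C : NNReal, ∀ g₀ g₁ : E → ℝ≥0∞, Measurable g₀ → Measurable g₁ →
      eLpNorm (coneMajorant μ B R g₀ g₁) q μ ≤ C * (eLpNorm g₀ p μ + eLpNorm g₁ p μ) := by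
  obtain ⟨C₁, hC₁⟩ := exists_eLpNorm_lintegral_dilatedIntegral_le μ hB_top hp hpq hd
  lift μ B ^ (1 - ((p : ℝ)⁻¹ - (q : ℝ)⁻¹)) to NNReal
    using ENNReal.rpow_ne_top_of_ne_zero hB0 hB_top with C₀ hC₀
  obtain ⟨b, hb⟩ : ∃ b : NNReal, (b : ℝ≥0∞) = (μ B)⁻¹ :=
    ⟨_, ENNReal.coe_toNNReal (ENNReal.inv_ne_top.2 hB0)⟩
  refine ⟨b * (C₀ + R * C₁), fun g₀ g₁ hg₀ hg₁ => ?_⟩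
  set A := dilatedIntegral μ B g₀ 1
  set D := fun x => ∫⁻ τ in Set.Ioc (0 : ℝ) 1, dilatedIntegral μ B g₁ τ x
  have hA : Measurable A := (measurable_dilatedIntegral hg₀).comp measurable_prodMk_right
  have hD : Measurable D := (measurable_dilatedIntegral hg₁).lintegral_prod_right'
  have hA_norm : eLpNorm A q μ ≤ C₀ * eLpNorm g₀ p μ := by
    simpa [hC₀] using eLpNorm_dilatedIntegral_le (B := B) hg₀ hp hpq one_pos
  calc eLpNorm (coneMajorant μ B R g₀ g₁) q μ
      ≤ b * eLpNorm (A + fun x => R * D x) q μ :=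
        eLpNorm_le_mul_eLpNorm_of_ae_le_mul' (.of_forall fun x => by rw [hb]; exact le_rfl) _
    _ ≤ b * (eLpNorm A q μ + eLpNorm (fun x => R * D x) q μ) := by
        gcongr
        exact eLpNorm_add_le hA.aestronglyMeasurable (hD.const_mul _).aestronglyMeasurable
          (ENNReal.one_le_coe_iff.2 (hp.trans hpq))
    _ ≤ b * (C₀ * eLpNorm g₀ p μ + R * (C₁ * eLpNorm g₁ p μ)) := by
        gcongr
        exact (eLpNorm_le_mul_eLpNorm_of_ae_le_mul' (g := D) (.of_forall fun _ => le_rfl) _).trans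
          (mul_le_mul_right (hC₁ g₁ hg₁) _)
    _ ≤ b * (C₀ * (eLpNorm g₀ p μ + eLpNorm g₁ p μ) +
          R * (C₁ * (eLpNorm g₀ p μ + eLpNorm g₁ p μ))) := by
        gcongr
        exacts [le_self_add, le_add_self]
    _ = _ := by
        push_cast
        ring

end DilatedIntegral

section Cone

variable {E F : Type*} [NormedAddCommGroup E] [NormedSpace ℝ E] [NormedAddCommGroup F]
  [NormedSpace ℝ F] {Ω : Set E} {f : E → F} {a x : E} {ρ : ℝ}

/-- The truncated open cone with vertex `x` generated by the ball `ball a ρ` lies in `Ω`; the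
vertex itself need not. -/
def ContainsCone (Ω : Set E) (a : E) (ρ : ℝ) (x : E) : Prop :=
  ∀ τ ∈ Set.Ioc (0 : ℝ) 1, ∀ h ∈ Metric.ball a ρ, x + τ • h ∈ Ω

/-- The cone condition of Sobolev space theory: every point of `Ω` is the vertex of a truncated cone
contained in `Ω`, of one of finitely many shapes `(a, ρ)`. Finitely many shapes replace the usual
single cone up to rotation, so that no Euclidean structure is needed. -/
def ConeCondition (Ω : Set E) : Prop :=
  ∃ s : Finset (E × ℝ), (∀ c ∈ s, 0 < c.2) ∧ ∀ x ∈ Ω, ∃ c ∈ s, ContainsCone Ω c.1 c.2 x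

theorem enorm_le_enorm_add_add_lintegral_fderiv (hf : ContDiff ℝ 1 f) (x h : E) :
    ‖f x‖ₑ ≤ ‖f (x + h)‖ₑ + ‖h‖ₑ * ∫⁻ τ in Set.Ioc (0 : ℝ) 1, ‖fderiv ℝ f (x + τ • h)‖ₑ := by
  have hderiv (τ : ℝ) : deriv (fun σ : ℝ => f (x + σ • h)) τ = fderiv ℝ f (x + τ • h) h := by
    have hline : HasDerivAt (fun σ : ℝ => x + σ • h) h τ := by
      simpa using ((hasDerivAt_id τ).smul_const h).const_add x
    exact ((hf.differentiable one_ne_zero _).hasFDerivAt.comp_hasDerivAt τ hline).deriv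
  have hftc : ‖f (x + h) - f x‖ₑ ≤ ∫⁻ τ in Set.Ioc (0 : ℝ) 1, ‖fderiv ℝ f (x + τ • h) h‖ₑ := by
    have hline : ContDiff ℝ 1 fun σ : ℝ => f (x + σ • h) := by fun_prop
    simpa [hderiv, restrict_Ioc_eq_restrict_Icc] using
      enorm_sub_le_lintegral_deriv_of_contDiffOn_Icc hline.contDiffOn zero_le_one
  calc ‖f x‖ₑ ≤ ‖f (x + h)‖ₑ + ‖f (x + h) - f x‖ₑ := by
        simpa using enorm_sub_le (a := f (x + h)) (b := f (x + h) - f x)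
    _ ≤ ‖f (x + h)‖ₑ + ∫⁻ τ in Set.Ioc (0 : ℝ) 1, ‖h‖ₑ * ‖fderiv ℝ f (x + τ • h)‖ₑ := by
        gcongr
        refine hftc.trans (lintegral_mono fun τ => ?_)
        rw [mul_comm]
        exact (fderiv ℝ f (x + τ • h)).le_opENorm h
    _ = _ := by rw [lintegral_const_mul' _ _ enorm_ne_top]

variable [MeasurableSpace E]

/-- The norm of `f` in the Sobolev space `W^{1,p}(μ)`. -/
def sobolevNorm (p : ℝ≥0∞) (μ : Measure E) (f : E → F) : ℝ≥0∞ :=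
  eLpNorm f p μ + eLpNorm (fderiv ℝ f) p μ

variable [FiniteDimensional ℝ E] [BorelSpace E]

theorem enorm_le_coneMajorant_of_containsCone (μ : Measure E) [μ.IsAddHaarMeasure]
    (hΩ : MeasurableSet Ω) (hf : ContDiff ℝ 1 f) (hρ : 0 < ρ) (hx : ContainsCone Ω a ρ x) :
    ‖f x‖ₑ ≤ coneMajorant μ (Metric.ball a ρ) (‖a‖ + ρ).toNNReal
      (Ω.indicator fun y => ‖f y‖ₑ) (Ω.indicator fun y => ‖fderiv ℝ f y‖ₑ) x := by
  rw [coneMajorant, mul_comm, ← div_eq_mul_inv, ENNReal.le_div_iff_mul_le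
    (.inl (Metric.measure_ball_pos μ a hρ).ne') (.inl measure_ball_lt_top.ne)]
  set B := Metric.ball a ρ
  set g₀ := Ω.indicator fun y => ‖f y‖ₑ
  set g₁ := Ω.indicator fun y => ‖fderiv ℝ f y‖ₑ
  have hg₀ : Measurable g₀ := hf.continuous.enorm.measurable.indicator hΩ
  have hg₁ : Measurable g₁ := (hf.continuous_fderiv one_ne_zero).enorm.measurable.indicator hΩ
  have hB {h : E} (hh : h ∈ B) : ‖h‖ₑ ≤ ENNReal.ofReal (‖a‖ + ρ) := by
    rw [← ofReal_norm]
    refine ENNReal.ofReal_le_ofReal ?_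
    have : ‖h - a‖ < ρ := mem_ball_iff_norm.1 hh
    linarith [norm_sub_norm_le h a]
  have hray {h : E} (hh : h ∈ B) : ‖f x‖ₑ ≤
      g₀ (x + (1 : ℝ) • h) +
        ENNReal.ofReal (‖a‖ + ρ) * ∫⁻ τ in Set.Ioc (0 : ℝ) 1, g₁ (x + τ • h) := by
    have hvertex : g₀ (x + (1 : ℝ) • h) = ‖f (x + h)‖ₑ := by
      simpa only [one_smul] using Set.indicator_of_mem (hx 1 (by simp) h hh) fun y => ‖f y‖ₑ
    have hsegment : ∫⁻ τ in Set.Ioc (0 : ℝ) 1, g₁ (x + τ • h) =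
        ∫⁻ τ in Set.Ioc (0 : ℝ) 1, ‖fderiv ℝ f (x + τ • h)‖ₑ :=
      setLIntegral_congr_fun measurableSet_Ioc fun τ hτ =>
        Set.indicator_of_mem (hx τ hτ h hh) _
    rw [hvertex, hsegment]
    exact (enorm_le_enorm_add_add_lintegral_fderiv hf x h).trans (by gcongr; exact hB hh)
  calc ‖f x‖ₑ * μ B = ∫⁻ _ in B, ‖f x‖ₑ ∂μ := by rw [setLIntegral_const]
    _ ≤ ∫⁻ h in B, (g₀ (x + (1 : ℝ) • h) + ENNReal.ofReal (‖a‖ + ρ) *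
          ∫⁻ τ in Set.Ioc (0 : ℝ) 1, g₁ (x + τ • h)) ∂μ :=
        setLIntegral_mono' measurableSet_ball fun h hh => hray hh
    _ = _ := by
        rw [lintegral_add_left (by fun_prop), lintegral_const_mul' _ _ ENNReal.ofReal_ne_top,
          lintegral_lintegral_swap (by fun_prop)]
        rfl

variable {p q : NNReal}

theorem exists_eLpNorm_restrict_le_sobolevNorm (F : Type*) [NormedAddCommGroup F]
    [NormedSpace ℝ F] (μ : Measure E) [μ.IsAddHaarMeasure] (hΩ : MeasurableSet Ω)
    (hcone : ConeCondition Ω) (hp : 1 ≤ p) (hpq : p ≤ q)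
    (hd : Module.finrank ℝ E * ((p : ℝ)⁻¹ - (q : ℝ)⁻¹) < 1) :
    ∃ C : NNReal, ∀ f : E → F, ContDiff ℝ 1 f →
      eLpNorm f q (μ.restrict Ω) ≤ C * sobolevNorm p (μ.restrict Ω) f := by
  obtain ⟨s, hs, hΩs⟩ := hcone
  set B := fun c : E × ℝ => Metric.ball c.1 c.2
  set R := fun c : E × ℝ => (‖c.1‖ + c.2).toNNReal
  choose! C hC using fun (c : E × ℝ) (hc : c ∈ s) => exists_eLpNorm_coneMajorant_le (B := B c) μ
    (Metric.measure_ball_pos μ c.1 (hs c hc)).ne' measure_ball_lt_top.ne (R c) hp hpq hd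
  refine ⟨∑ c ∈ s, C c, fun f hf => ?_⟩
  set g₀ := Ω.indicator fun y => ‖f y‖ₑ
  set g₁ := Ω.indicator fun y => ‖fderiv ℝ f y‖ₑ
  have hg₀ : Measurable g₀ := hf.continuous.enorm.measurable.indicator hΩ
  have hg₁ : Measurable g₁ := (hf.continuous_fderiv one_ne_zero).enorm.measurable.indicator hΩ
  set M := fun c => coneMajorant μ (B c) (R c) g₀ g₁
  have hfM : ∀ x ∈ Ω, ‖f x‖ₑ ≤ ‖(∑ c ∈ s, M c) x‖ₑ := fun x hx => by
    obtain ⟨c, hc, hxc⟩ := hΩs x hx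
    rw [enorm_eq_self, Finset.sum_apply]
    exact (enorm_le_coneMajorant_of_containsCone μ hΩ hf (hs c hc) hxc).trans
      (Finset.single_le_sum (f := (M · x)) (fun _ _ => zero_le) hc)
  calc eLpNorm f q (μ.restrict Ω) ≤ eLpNorm (∑ c ∈ s, M c) q (μ.restrict Ω) :=
        eLpNorm_mono_enorm_ae (ae_restrict_of_forall_mem hΩ hfM)
    _ ≤ eLpNorm (∑ c ∈ s, M c) q μ := eLpNorm_restrict_le ..
    _ ≤ ∑ c ∈ s, eLpNorm (M c) q μ :=
        eLpNorm_sum_le (fun c _ => (measurable_coneMajorant hg₀ hg₁ _).aestronglyMeasurable)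
          (ENNReal.one_le_coe_iff.2 (hp.trans hpq))
    _ ≤ ∑ c ∈ s, C c * (eLpNorm g₀ p μ + eLpNorm g₁ p μ) :=
        Finset.sum_le_sum fun c hc => hC c hc g₀ g₁ hg₀ hg₁
    _ = _ := by
        rw [← Finset.sum_mul, ENNReal.ofNNReal_finsetSum, eLpNorm_indicator_eq_eLpNorm_restrict hΩ,
          eLpNorm_indicator_eq_eLpNorm_restrict hΩ, eLpNorm_enorm, eLpNorm_enorm, sobolevNorm]

end Cone

section ConeConditionExamples

open scoped Topology

variable {E : Type*} [NormedAddCommGroup E] [NormedSpace ℝ E] {Ω : Set E} {x : E}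

theorem coneCondition_of_convexCone (K : ConvexCone ℝ E) (hK : IsOpen (K : Set E))
    (hK_nonempty : (K : Set E).Nonempty) : ConeCondition (K : Set E) := by
  obtain ⟨a, ha⟩ := hK_nonempty
  obtain ⟨ρ, hρ, hball⟩ := Metric.isOpen_iff.1 hK a ha
  refine ⟨{(a, ρ)}, by simpa using hρ, fun x hx => ⟨(a, ρ), by simp, fun τ hτ h hh => ?_⟩⟩
  exact K.add_mem hx (K.smul_mem hτ.1 (hball hh))

theorem coneCondition_univ : ConeCondition (Set.univ : Set E) :=
  coneCondition_of_convexCone ⊤ isOpen_univ Set.univ_nonempty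

theorem coneCondition_of_isBounded [ProperSpace E] (hΩ : Bornology.IsBounded Ω)
    (hloc : ∀ x ∈ closure Ω, ∃ a, ∃ ρ > 0, ∀ᶠ y in 𝓝[Ω] x, ContainsCone Ω a ρ y) :
    ConeCondition Ω := by
  classical
  obtain ⟨s, hs, hclosure⟩ : ∃ s : Finset (E × ℝ), (∀ c ∈ s, 0 < c.2) ∧
      ∀ y ∈ closure Ω, y ∈ Ω → ∃ c ∈ s, ContainsCone Ω c.1 c.2 y := by
    refine hΩ.isCompact_closure.induction_on
      (p := fun t => ∃ s : Finset (E × ℝ), (∀ c ∈ s, 0 < c.2) ∧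
        ∀ y ∈ t, y ∈ Ω → ∃ c ∈ s, ContainsCone Ω c.1 c.2 y) ⟨∅, by simp⟩ ?_ ?_ fun x hx => ?_
    · rintro t t' htt' ⟨s, hs, hst'⟩
      exact ⟨s, hs, fun y hy => hst' y (htt' hy)⟩
    · rintro t t' ⟨s, hs, hst⟩ ⟨s', hs', hst'⟩
      refine ⟨s ∪ s', fun c hc => (Finset.mem_union.1 hc).elim (hs c) (hs' c), ?_⟩
      rintro y (hy | hy) hyΩ
      · obtain ⟨c, hc, hcone⟩ := hst y hy hyΩ
        exact ⟨c, Finset.mem_union_left _ hc, hcone⟩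
      · obtain ⟨c, hc, hcone⟩ := hst' y hy hyΩ
        exact ⟨c, Finset.mem_union_right _ hc, hcone⟩
    · obtain ⟨a, ρ, hρ, hcone⟩ := hloc x hx
      refine ⟨_, mem_nhdsWithin_of_mem_nhds (eventually_nhdsWithin_iff.1 hcone), {(a, ρ)},
        by simpa using hρ, fun y hy hyΩ => ⟨(a, ρ), by simp, hy hyΩ⟩⟩
  exact ⟨s, hs, fun y hy => hclosure y (subset_closure hy) hy⟩

theorem add_smul_mem_ball {y h : E} {r s τ : ℝ} (hy : y ∈ Metric.ball x r)
    (hh : h ∈ Metric.ball 0 s) (hτ : τ ∈ Set.Ioc (0 : ℝ) 1) :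
    y + τ • h ∈ Metric.ball x (r + s) := by
  rw [mem_ball_iff_norm] at hy ⊢
  have hτh : ‖τ • h‖ < s :=
    calc ‖τ • h‖ ≤ ‖h‖ := by
          rw [norm_smul, Real.norm_of_nonneg hτ.1.le]
          exact mul_le_of_le_one_left (norm_nonneg h) hτ.2
      _ < s := mem_ball_zero_iff.1 hh
  calc ‖y + τ • h - x‖ = ‖(y - x) + τ • h‖ := by rw [add_sub_right_comm]
    _ < r + s := (norm_add_le _ _).trans_lt (add_lt_add hy hτh)

theorem eventually_containsCone_of_mem_nhds (hΩ : Ω ∈ 𝓝 x) :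
    ∃ ρ > 0, ∀ᶠ y in 𝓝 x, ContainsCone Ω 0 ρ y := by
  obtain ⟨ε, hε, hball⟩ := Metric.mem_nhds_iff.1 hΩ
  refine ⟨ε / 2, half_pos hε, ?_⟩
  filter_upwards [Metric.ball_mem_nhds x (half_pos hε)] with y hy τ hτ h hh
  exact hball (add_halves ε ▸ add_smul_mem_ball hy hh hτ)

theorem eventually_containsCone_of_hasStrictFDerivAt {Φ : E → ℝ} {Φ' : E →L[ℝ] ℝ} {c : ℝ}
    (hΦ : HasStrictFDerivAt Φ Φ' x) (hΦ' : Φ' ≠ 0) (hΩ : ∀ᶠ y in 𝓝 x, y ∈ Ω ↔ c < Φ y) :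
    ∃ a, ∃ ρ > 0, ∀ᶠ y in 𝓝[Ω] x, ContainsCone Ω a ρ y := by
  obtain ⟨a₀, ha₀⟩ : ∃ a₀, 0 < Φ' a₀ := by
    obtain ⟨a, ha⟩ := DFunLike.ne_iff.1 hΦ'
    exact ha.lt_or_gt.elim (fun h => ⟨-a, by simpa using h⟩) fun h => ⟨a, h⟩
  obtain ⟨κ, hκ, hκa₀⟩ := exists_pos_mul_lt ha₀ ‖a₀‖
  obtain ⟨ε, hε, hball⟩ : ∃ ε > 0, ∀ y ∈ Metric.ball x ε, (y ∈ Ω ↔ c < Φ y) ∧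
      ∀ z ∈ Metric.ball x ε, |Φ z - Φ y - Φ' (z - y)| ≤ κ * ‖z - y‖ := by
    have hstrict := (hΦ.isLittleO.bound hκ).and (hΩ.prod_inr_nhds x)
    rw [nhds_prod_eq, (Metric.nhds_basis_ball.prod_self).eventually_iff] at hstrict
    obtain ⟨ε, hε, hstrict⟩ := hstrict
    exact ⟨ε, hε, fun y hy => ⟨(@hstrict (y, y) ⟨hy, hy⟩).2,
      fun z hz => (@hstrict (z, y) ⟨hz, hy⟩).1⟩⟩
  obtain ⟨t, ht, hta₀⟩ := exists_pos_mul_lt (half_pos hε) ‖a₀‖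
  have hopen : IsOpen ({h | ‖h‖ * κ < Φ' h} ∩ Metric.ball 0 (ε / 2)) :=
    (isOpen_lt (by fun_prop) (by fun_prop)).inter Metric.isOpen_ball
  obtain ⟨ρ, hρ, hρ_ball⟩ := Metric.isOpen_iff.1 hopen (t • a₀) (by
    constructor
    · simpa [norm_smul, abs_of_pos ht, mul_assoc] using (mul_lt_mul_iff_right₀ ht).2 hκa₀
    · simpa [norm_smul, abs_of_pos ht, mul_comm] using hta₀)
  refine ⟨t • a₀, ρ, hρ, ?_⟩
  filter_upwards [self_mem_nhdsWithin, mem_nhdsWithin_of_mem_nhds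
    (Metric.ball_mem_nhds x (half_pos hε))] with y hyΩ hy τ hτ h hh
  obtain ⟨hκh, hh_ball⟩ := hρ_ball hh
  have hy_ball : y ∈ Metric.ball x ε := Metric.ball_subset_ball (half_le_self hε.le) hy
  have hz_ball : y + τ • h ∈ Metric.ball x ε := add_halves ε ▸ add_smul_mem_ball hy hh_ball hτ
  have hincrement : κ * ‖τ • h‖ < Φ' (τ • h) := by
    simpa [norm_smul, abs_of_pos hτ.1, mul_comm, mul_assoc, mul_left_comm] using
      (mul_lt_mul_iff_right₀ hτ.1).2 hκh
  have herror := (abs_le.1 ((hball y hy_ball).2 _ hz_ball)).1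
  rw [add_sub_cancel_left] at herror
  rw [(hball _ hz_ball).1]
  linarith [(hball y hy_ball).1.1 hyΩ]

end ConeConditionExamples

section Domains

variable {Ω : Set E3}

theorem exists_hasStrictFDerivAt_height (e : E3 ≃ₗᵢ[ℝ] E3) {ω : ℝ × ℝ → ℝ} (hω : ContDiff ℝ 1 ω)
    (x : E3) : ∃ Φ' : E3 →L[ℝ] ℝ,
      HasStrictFDerivAt (fun y => e y 2 - ω (e y 0, e y 1)) Φ' x ∧ Φ' ≠ 0 := by
  set Φ : E3 → ℝ := fun y => e y 2 - ω (e y 0, e y 1)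
  have hΦ : ContDiff ℝ 1 Φ := by
    have he := e.contDiff (n := 1)
    fun_prop
  refine ⟨fderiv ℝ Φ x, hΦ.contDiffAt.hasStrictFDerivAt one_ne_zero, fun hzero => ?_⟩
  set a : E3 := e.symm (EuclideanSpace.single 2 1)
  have hΦ_line (t : ℝ) : Φ (x + t • a) = Φ x + t := by
    simp [Φ, a]
    ring
  have hΦa : fderiv ℝ Φ x a = 1 := by
    rw [← (hΦ.differentiable one_ne_zero x).lineDeriv_eq_fderiv, lineDeriv]
    simp [hΦ_line]
  simp [hzero] at hΦa

theorem IsC11Domain.coneCondition (hΩ : IsC11Domain Ω) : ConeCondition Ω := by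
  obtain ⟨hopen, -, hbounded, hgraph⟩ := hΩ
  refine coneCondition_of_isBounded hbounded fun x hx => ?_
  by_cases hxΩ : x ∈ Ω
  · obtain ⟨ρ, hρ, hcone⟩ := eventually_containsCone_of_mem_nhds (hopen.mem_nhds hxΩ)
    exact ⟨0, ρ, hρ, hcone.filter_mono nhdsWithin_le_nhds⟩
  · obtain ⟨e, ω, r, hr, hω, -, hball⟩ := hgraph x (hopen.frontier_eq ▸ ⟨hx, hxΩ⟩)
    obtain ⟨Φ', hΦ, hΦ'⟩ := exists_hasStrictFDerivAt_height e hω x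
    refine eventually_containsCone_of_hasStrictFDerivAt (c := 0) hΦ hΦ' ?_
    filter_upwards [Metric.ball_mem_nhds x hr] with y hy
    simpa [Metric.mem_ball.1 hy] using Set.ext_iff.1 hball y

theorem coneCondition_halfSpace : ConeCondition {x : E3 | 0 < x 2} := by
  let K : ConvexCone ℝ E3 :=
    { carrier := {x | 0 < x 2}
      smul_mem' := fun c hc x hx => mul_pos hc hx
      add_mem' := fun x (hx : 0 < x 2) y (hy : 0 < y 2) => show 0 < x 2 + y 2 by positivity }
  have hK : IsOpen {x : E3 | 0 < x 2} := isOpen_lt (by fun_prop) (by fun_prop)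
  exact coneCondition_of_convexCone K hK
    ⟨EuclideanSpace.single 2 1, show (0 : ℝ) < EuclideanSpace.single (2 : Fin 3) 1 2 by simp⟩

theorem isOpen_and_coneCondition
    (hΩ : Ω = Set.univ ∨ Ω = {x : E3 | 0 < x 2} ∨ IsC11Domain Ω) : IsOpen Ω ∧ ConeCondition Ω := by
  rcases hΩ with rfl | rfl | hΩ
  · exact ⟨isOpen_univ, coneCondition_univ⟩
  · exact ⟨isOpen_lt (by fun_prop) (by fun_prop), coneCondition_halfSpace⟩
  · exact ⟨hΩ.1, hΩ.coneCondition⟩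

end Domains

section BochnerSobolev

variable {E F : Type*} [NormedAddCommGroup E] [NormedAddCommGroup F] [NormedSpace ℝ F] {T t : ℝ}

theorem enorm_le_enorm_add_lintegral_deriv {g : ℝ → F} (hg : ContDiff ℝ 1 g) {s : ℝ}
    (hs : s ∈ Set.Ioc 0 T) (ht : t ∈ Set.Ioc 0 T) :
    ‖g t‖ₑ ≤ ‖g s‖ₑ + ∫⁻ r in Set.Ioc 0 T, ‖deriv g r‖ₑ := by
  have hftc {a b : ℝ} (ha : a ∈ Set.Ioc 0 T) (hb : b ∈ Set.Ioc 0 T) (hab : a ≤ b) :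
      ‖g b - g a‖ₑ ≤ ∫⁻ r in Set.Ioc 0 T, ‖deriv g r‖ₑ :=
    (enorm_sub_le_lintegral_deriv_of_contDiffOn_Icc hg.contDiffOn hab).trans
      (lintegral_mono_set (Set.Icc_subset_Ioc ha.1 hb.2))
  have hdiff : ‖g t - g s‖ₑ ≤ ∫⁻ r in Set.Ioc 0 T, ‖deriv g r‖ₑ := by
    rcases le_total s t with h | h
    · exact hftc hs ht h
    · exact enorm_sub_rev (g t) (g s) ▸ hftc ht hs h
  calc ‖g t‖ₑ = ‖g s + (g t - g s)‖ₑ := by rw [add_sub_cancel]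
    _ ≤ _ := (enorm_add_le _ _).trans (by gcongr)

theorem enorm_le_mul_lintegral_enorm_add_deriv {g : ℝ → F} (hg : ContDiff ℝ 1 g)
    (ht : t ∈ Set.Ioc 0 T) :
    ‖g t‖ₑ ≤ (1 + (ENNReal.ofReal T)⁻¹) * ∫⁻ s in Set.Ioc 0 T, (‖g s‖ₑ + ‖deriv g s‖ₑ) := by
  have hT : ENNReal.ofReal T ≠ 0 := by simpa using ht.1.trans_le ht.2
  set G := ∫⁻ s in Set.Ioc 0 T, ‖g s‖ₑ
  set G' := ∫⁻ s in Set.Ioc 0 T, ‖deriv g s‖ₑ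
  have hmean : ‖g t‖ₑ * ENNReal.ofReal T ≤ G + G' * ENNReal.ofReal T := by
    calc ‖g t‖ₑ * ENNReal.ofReal T = ∫⁻ _ in Set.Ioc 0 T, ‖g t‖ₑ := by simp
      _ ≤ ∫⁻ s in Set.Ioc 0 T, (‖g s‖ₑ + G') :=
          setLIntegral_mono' measurableSet_Ioc fun s hs =>
            enorm_le_enorm_add_lintegral_deriv hg hs ht
      _ = _ := by rw [lintegral_add_right _ measurable_const]; simp [G]
  rw [lintegral_add_left hg.continuous.enorm.measurable]
  calc ‖g t‖ₑ ≤ (G + G' * ENNReal.ofReal T) * (ENNReal.ofReal T)⁻¹ := by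
        rwa [← div_eq_mul_inv, ENNReal.le_div_iff_mul_le (.inl hT) (.inl ENNReal.ofReal_ne_top)]
    _ = (ENNReal.ofReal T)⁻¹ * G + G' := by
        rw [add_mul, mul_assoc, ENNReal.mul_inv_cancel hT ENNReal.ofReal_ne_top, mul_one, mul_comm]
    _ ≤ (1 + (ENNReal.ofReal T)⁻¹) * G + (1 + (ENNReal.ofReal T)⁻¹) * G' := by
        gcongr
        · exact le_add_self
        · exact le_mul_of_one_le_left' le_self_add
    _ = _ := (mul_add _ _ _).symm

theorem continuous_uncurry_fderiv [NormedSpace ℝ E] {w : ℝ → E → F}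
    (hw : ContDiff ℝ 1 (Function.uncurry w)) :
    Continuous fun z : ℝ × E => fderiv ℝ (w z.1) z.2 := by
  have h : ContDiff ℝ 1 (Function.uncurry fun z : ℝ × E => w z.1) := by fun_prop
  exact (h.fderiv (n := 0) contDiff_snd (zero_add 1).le).continuous

variable [MeasurableSpace E] [BorelSpace E] {μ : Measure E} {p q : NNReal}
  {w w' : ℝ → E → F}

theorem eLpNorm_le_mul_lintegral_eLpNorm_add [SigmaFinite μ] (hq : 1 ≤ q)
    (hw : Continuous (Function.uncurry w)) (hw' : Continuous (Function.uncurry w'))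
    (hderiv : ∀ t x, HasDerivAt (w · x) (w' t x) t) (ht : t ∈ Set.Ioc 0 T) :
    eLpNorm (w t) q μ ≤ (1 + (ENNReal.ofReal T)⁻¹) *
      ∫⁻ s in Set.Ioc 0 T, (eLpNorm (w s) q μ + eLpNorm (w' s) q μ) := by
  have hq' : (1 : ℝ≥0∞) ≤ q := ENNReal.one_le_coe_iff.2 hq
  set A : E → ℝ → ℝ≥0∞ := fun x s => ‖w s x‖ₑ + ‖w' s x‖ₑ
  have hA : Measurable (Function.uncurry A) :=
    (by fun_prop : Continuous fun z : E × ℝ => ‖w z.2 z.1‖ₑ + ‖w' z.2 z.1‖ₑ).measurable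
  have hpoint (x : E) :
      ‖w t x‖ₑ ≤ (1 + (ENNReal.ofReal T)⁻¹) * ∫⁻ s in Set.Ioc 0 T, A x s := by
    have hdiff : deriv (w · x) = (w' · x) := funext fun s => (hderiv s x).deriv
    have hwx : ContDiff ℝ 1 (w · x) := contDiff_one_iff_deriv.2
      ⟨fun s => (hderiv s x).differentiableAt, by rw [hdiff]; fun_prop⟩
    simpa only [hdiff] using enorm_le_mul_lintegral_enorm_add_deriv hwx ht
  have hsum (s : ℝ) : eLpNorm (A · s) q μ ≤ eLpNorm (w s) q μ + eLpNorm (w' s) q μ := by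
    have hws : Continuous (w s) := by fun_prop
    have hws' : Continuous (w' s) := by fun_prop
    refine (eLpNorm_add_le (f := fun x => ‖w s x‖ₑ) (g := fun x => ‖w' s x‖ₑ)
      hws.enorm.aestronglyMeasurable hws'.enorm.aestronglyMeasurable hq').trans_eq ?_
    rw [eLpNorm_enorm, eLpNorm_enorm]
  calc eLpNorm (w t) q μ
      ≤ (1 + (ENNReal.ofReal T)⁻¹) * eLpNorm (fun x => ∫⁻ s in Set.Ioc 0 T, A x s) q μ :=
        eLpNorm_le_mul_eLpNorm_of_ae_le_mul'' q hA.lintegral_prod_right'.aestronglyMeasurable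
          (ae_of_all _ hpoint)
    _ ≤ (1 + (ENNReal.ofReal T)⁻¹) * ∫⁻ s in Set.Ioc 0 T, eLpNorm (A · s) q μ := by
        gcongr
        exact eLpNorm_lintegral_le hA hq
    _ ≤ _ := by
        gcongr with s
        exact hsum s

variable [NormedSpace ℝ E]

/-- The norm of `w` in the Bochner–Sobolev space `L^p(m; W^{1,p}(μ))`. -/
def bochnerSobolevNorm (p : ℝ≥0∞) (m : Measure ℝ) (μ : Measure E) (w : ℝ → E → F) : ℝ≥0∞ :=
  eLpNorm (fun t => sobolevNorm p μ (w t)) p m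

variable [FiniteDimensional ℝ E]

theorem measurable_sobolevNorm [SFinite μ] (hp : p ≠ 0)
    (hw : ContDiff ℝ 1 (Function.uncurry w)) : Measurable fun t => sobolevNorm p μ (w t) :=
  (measurable_eLpNorm_section hw.continuous.enorm.measurable hp).add
    (measurable_eLpNorm_section (continuous_uncurry_fderiv hw).enorm.measurable hp)

theorem bochnerSobolevNorm_le_eLpNorm_prod {m : Measure ℝ} [SFinite μ] (hp : 1 ≤ p)
    (hw : ContDiff ℝ 1 (Function.uncurry w)) :
    bochnerSobolevNorm p m μ w ≤ eLpNorm (fun z : ℝ × E => w z.1 z.2) p (m.prod μ) +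
      eLpNorm (fun z : ℝ × E => fderiv ℝ (w z.1) z.2) p (m.prod μ) := by
  have hp0 : p ≠ 0 := (zero_lt_one.trans_le hp).ne'
  have hw_meas := hw.continuous.enorm.measurable
  have hw'_meas := (continuous_uncurry_fderiv hw).enorm.measurable
  rw [eLpNorm_prod_eq hw_meas hp0, eLpNorm_prod_eq (f := fun t => fderiv ℝ (w t)) hw'_meas hp0]
  exact eLpNorm_add_le (measurable_eLpNorm_section hw_meas hp0).aestronglyMeasurable
    (measurable_eLpNorm_section hw'_meas hp0).aestronglyMeasurable (ENNReal.one_le_coe_iff.2 hp)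

variable {Ω : Set E}

theorem exists_eLpNorm_le_bochnerSobolevNorm (F : Type*) [NormedAddCommGroup F] [NormedSpace ℝ F]
    (μ : Measure E) [μ.IsAddHaarMeasure] (hT : 0 < T) (hΩ : MeasurableSet Ω)
    (hcone : ConeCondition Ω) (hp : 1 ≤ p) (hpq : p ≤ q)
    (hd : Module.finrank ℝ E * ((p : ℝ)⁻¹ - (q : ℝ)⁻¹) < 1) :
    ∃ C : NNReal, ∀ w w' : ℝ → E → F, ContDiff ℝ 1 (Function.uncurry w) →
      ContDiff ℝ 1 (Function.uncurry w') → (∀ t x, HasDerivAt (w · x) (w' t x) t) →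
      ∀ t ∈ Set.Ioc 0 T, eLpNorm (w t) q (μ.restrict Ω) ≤
        C * (bochnerSobolevNorm p (volume.restrict (Set.Ioc 0 T)) (μ.restrict Ω) w +
          bochnerSobolevNorm p (volume.restrict (Set.Ioc 0 T)) (μ.restrict Ω) w') := by
  obtain ⟨C, hC⟩ := exists_eLpNorm_restrict_le_sobolevNorm F μ hΩ hcone hp hpq hd
  set m := volume.restrict (Set.Ioc 0 T)
  set ν := μ.restrict Ω
  set A := (1 + (ENNReal.ofReal T)⁻¹).toNNReal
  set B := (m Set.univ ^ (1 - (p : ℝ)⁻¹)).toNNReal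
  have hA : (A : ℝ≥0∞) = 1 + (ENNReal.ofReal T)⁻¹ := ENNReal.coe_toNNReal (by simpa using hT)
  have hB : (B : ℝ≥0∞) = m Set.univ ^ (1 - (p : ℝ)⁻¹) :=
    ENNReal.coe_toNNReal <| ENNReal.rpow_ne_top_of_nonneg
      (sub_nonneg.2 (inv_le_one_of_one_le₀ hp)) (measure_ne_top _ _)
  refine ⟨A * (C * B), fun w w' hw hw' hderiv t ht => ?_⟩
  have hp0 : p ≠ 0 := (zero_lt_one.trans_le hp).ne'
  have hslice {w : ℝ → E → F} (hw : ContDiff ℝ 1 (Function.uncurry w)) (s : ℝ) :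
      eLpNorm (w s) q ν ≤ C * sobolevNorm p ν (w s) :=
    hC _ (hw.comp (contDiff_prodMk_right s))
  have hint {w : ℝ → E → F} (hw : ContDiff ℝ 1 (Function.uncurry w)) :
      ∫⁻ s, sobolevNorm p ν (w s) ∂m ≤ B * bochnerSobolevNorm p m ν w := by
    simpa [eLpNorm_one_eq_lintegral_enorm, hB, mul_comm, bochnerSobolevNorm] using
      eLpNorm_le_eLpNorm_mul_rpow_measure_univ (μ := m) (ENNReal.one_le_coe_iff.2 hp)
        (measurable_sobolevNorm (μ := ν) hp0 hw).aestronglyMeasurable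
  calc eLpNorm (w t) q ν ≤ A * ∫⁻ s, (eLpNorm (w s) q ν + eLpNorm (w' s) q ν) ∂m := by
        rw [hA]
        exact eLpNorm_le_mul_lintegral_eLpNorm_add (hp.trans hpq) hw.continuous hw'.continuous
          hderiv ht
    _ ≤ A * ∫⁻ s, C * (sobolevNorm p ν (w s) + sobolevNorm p ν (w' s)) ∂m := by
        gcongr with s
        rw [mul_add]
        exact add_le_add (hslice hw s) (hslice hw' s)
    _ ≤ A * (C * (B * bochnerSobolevNorm p m ν w + B * bochnerSobolevNorm p m ν w')) := by
        rw [lintegral_const_mul' _ _ ENNReal.coe_ne_top,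
          lintegral_add_left (measurable_sobolevNorm hp0 hw)]
        gcongr
        · exact hint hw
        · exact hint hw'
    _ = _ := by push_cast; ring

theorem holderTriple_two_mul (hp : p ≠ 0) :
    ENNReal.HolderTriple (2 * p : NNReal) (2 * p : NNReal) p := by
  constructor
  rw [← ENNReal.coe_inv hp, ← ENNReal.coe_inv (by positivity), ← ENNReal.coe_add]
  congr 1
  field_simp
  norm_num

theorem exists_eLpNorm_smul_le_bochnerSobolevNorm (F : Type*) [NormedAddCommGroup F]
    [NormedSpace ℝ F] (μ : Measure E) [μ.IsAddHaarMeasure] (hT : 0 < T) (hΩ : MeasurableSet Ω)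
    (hcone : ConeCondition Ω) (hp : 1 ≤ p) (hd : Module.finrank ℝ E < 2 * (p : ℝ)) :
    ∃ C : NNReal, ∀ (w w' : ℝ → E → ℝ) (z : ℝ → E → F), ContDiff ℝ 1 (Function.uncurry w) →
      ContDiff ℝ 1 (Function.uncurry w') → (∀ t x, HasDerivAt (w · x) (w' t x) t) →
      ContDiff ℝ 1 (Function.uncurry z) →
      eLpNorm (fun a : ℝ × E => w a.1 a.2 • z a.1 a.2) p
          ((volume.restrict (Set.Ioc 0 T)).prod (μ.restrict Ω)) ≤
        C * (bochnerSobolevNorm p (volume.restrict (Set.Ioc 0 T)) (μ.restrict Ω) w +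
            bochnerSobolevNorm p (volume.restrict (Set.Ioc 0 T)) (μ.restrict Ω) w') *
          bochnerSobolevNorm p (volume.restrict (Set.Ioc 0 T)) (μ.restrict Ω) z := by
  have hp0 : p ≠ 0 := (zero_lt_one.trans_le hp).ne'
  have hp2 : p ≤ 2 * p := le_mul_of_one_le_left' one_le_two
  have hd' : Module.finrank ℝ E * ((p : ℝ)⁻¹ - ((2 * p : NNReal) : ℝ)⁻¹) < 1 := by
    have hp0' : (0 : ℝ) < p := by positivity
    have hgap : (p : ℝ)⁻¹ - ((2 * p : NNReal) : ℝ)⁻¹ = (2 * (p : ℝ))⁻¹ := by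
      push_cast
      field_simp
      ring
    rwa [hgap, ← div_eq_mul_inv, div_lt_one (mul_pos two_pos hp0')]
  have hholder := holderTriple_two_mul hp0
  obtain ⟨C₁, hC₁⟩ := exists_eLpNorm_le_bochnerSobolevNorm ℝ μ hT hΩ hcone hp hp2 hd'
  obtain ⟨C₂, hC₂⟩ := exists_eLpNorm_restrict_le_sobolevNorm F μ hΩ hcone hp hp2 hd'
  refine ⟨C₁ * C₂, fun w w' z hw hw' hderiv hz => ?_⟩
  set m := volume.restrict (Set.Ioc 0 T)
  set ν := μ.restrict Ω
  set N := bochnerSobolevNorm p m ν w + bochnerSobolevNorm p m ν w'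
  have hslice : ∀ t ∈ Set.Ioc 0 T,
      eLpNorm (fun x => w t x • z t x) p ν ≤ C₁ * C₂ * N * sobolevNorm p ν (z t) := fun t ht => by
    have hwt : ContDiff ℝ 1 (w t) := hw.comp (contDiff_prodMk_right t)
    have hzt : ContDiff ℝ 1 (z t) := hz.comp (contDiff_prodMk_right t)
    calc eLpNorm (fun x => w t x • z t x) p ν
        ≤ eLpNorm (w t) (2 * p : NNReal) ν * eLpNorm (z t) (2 * p : NNReal) ν :=
          eLpNorm_smul_le_mul_eLpNorm hzt.continuous.aestronglyMeasurable
            hwt.continuous.aestronglyMeasurable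
      _ ≤ (C₁ * N) * (C₂ * sobolevNorm p ν (z t)) :=
          mul_le_mul' (hC₁ w w' hw hw' hderiv t ht) (hC₂ _ hzt)
      _ = _ := by ring
  have hmeas : Measurable fun a : ℝ × E => ‖w a.1 a.2 • z a.1 a.2‖ₑ :=
    (hw.continuous.smul hz.continuous).enorm.measurable
  rw [eLpNorm_prod_eq (f := fun t x => w t x • z t x) hmeas hp0]
  exact eLpNorm_le_mul_eLpNorm_of_ae_le_mul'' _
    (measurable_sobolevNorm hp0 hz).aestronglyMeasurable
    (ae_restrict_of_forall_mem measurableSet_Ioc hslice)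

end BochnerSobolev

section SpaceTime

variable {w : ℝ → E3 → ℝ} {m n : WithTop ℕ∞}

theorem enorm_fderiv_le_sum_enorm_Dx (f : E3 → ℝ) (x : E3) :
    ‖fderiv ℝ f x‖ₑ ≤ ∑ j, ‖Dx f j x‖ₑ := by
  have hbound : ‖fderiv ℝ f x‖₊ ≤ ∑ j, ‖Dx f j x‖₊ := by
    refine ContinuousLinearMap.opNNNorm_le_bound _ _ fun h => ?_
    have hsum : fderiv ℝ f x h = ∑ j, h j • Dx f j x := by
      conv_lhs => rw [← (EuclideanSpace.basisFun (Fin 3) ℝ).sum_repr h, map_sum]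
      simp [Dx]
    rw [hsum, Finset.sum_mul]
    refine (nnnorm_sum_le _ _).trans (Finset.sum_le_sum fun j _ => ?_)
    rw [nnnorm_smul, mul_comm]
    gcongr
    exact PiLp.nnnorm_apply_le h j
  simpa only [enorm_eq_nnnorm, ← ENNReal.ofNNReal_finsetSum, ENNReal.coe_le_coe] using hbound

theorem contDiff_uncurry_Dx (hw : ContDiff ℝ m (Function.uncurry w)) (hnm : n + 1 ≤ m)
    (i : Fin 3) : ContDiff ℝ n (Function.uncurry fun t x => Dx (w t) i x) := by
  have h : ContDiff ℝ m (Function.uncurry fun z : ℝ × E3 => w z.1) := by fun_prop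
  exact (h.fderiv contDiff_snd hnm).clm_apply contDiff_const

theorem contDiff_uncurry_dt (hw : ContDiff ℝ m (Function.uncurry w)) (hnm : n + 1 ≤ m) :
    ContDiff ℝ n (Function.uncurry (dt w)) := by
  have h : ContDiff ℝ m (Function.uncurry fun (z : ℝ × E3) s => w s z.2) := by fun_prop
  exact (h.fderiv contDiff_fst hnm).clm_apply contDiff_const

theorem hasDerivAt_dt (hw : ContDiff ℝ 1 (Function.uncurry w)) (t : ℝ) (x : E3) :
    HasDerivAt (w · x) (dt w t x) t := by
  have h : ContDiff ℝ 1 (w · x) := by fun_prop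
  exact (h.differentiable one_ne_zero t).hasDerivAt

theorem Dx_eq_fderiv_uncurry (hw : Differentiable ℝ (Function.uncurry w)) (t : ℝ) (i : Fin 3)
    (x : E3) :
    Dx (w t) i x = fderiv ℝ (Function.uncurry w) (t, x) (0, EuclideanSpace.single i 1) := by
  have h : HasFDerivAt (w t) _ x := (hw (t, x)).hasFDerivAt.comp x (hasFDerivAt_prodMk_right t x)
  simp [Dx, h.fderiv]

theorem dt_eq_fderiv_uncurry (hw : Differentiable ℝ (Function.uncurry w)) (t : ℝ) (x : E3) :
    dt w t x = fderiv ℝ (Function.uncurry w) (t, x) (1, 0) := by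
  have h : HasFDerivAt (w · x) _ t :=
    (hw (t, x)).hasFDerivAt.comp (f := (·, x)) t (hasFDerivAt_prodMk_left t x)
  simp [dt, h.hasDerivAt.deriv]

theorem Dx_dt (hw : ContDiff ℝ 2 (Function.uncurry w)) (t : ℝ) (i : Fin 3) (x : E3) :
    Dx (dt w t) i x = dt (fun s y => Dx (w s) i y) t x := by
  have hdt := contDiff_uncurry_dt (n := 1) hw one_add_one_eq_two.le
  have hDx := contDiff_uncurry_Dx (n := 1) hw one_add_one_eq_two.le i
  have hw' := hw.differentiable two_ne_zero
  have hfw : Differentiable ℝ (fderiv ℝ (Function.uncurry w)) :=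
    (hw.fderiv_right (m := 1) one_add_one_eq_two.le).differentiable one_ne_zero
  rw [Dx_eq_fderiv_uncurry (hdt.differentiable one_ne_zero),
    dt_eq_fderiv_uncurry (hDx.differentiable one_ne_zero)]
  have hdt_eq : Function.uncurry (dt w) = fun z => fderiv ℝ (Function.uncurry w) z (1, 0) :=
    funext fun z => dt_eq_fderiv_uncurry hw' z.1 z.2
  have hDx_eq : (Function.uncurry fun s y => Dx (w s) i y) =
      fun z => fderiv ℝ (Function.uncurry w) z (0, EuclideanSpace.single i 1) :=
    funext fun z => Dx_eq_fderiv_uncurry hw' z.1 i z.2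
  rw [hdt_eq, hDx_eq, fderiv_clm_apply (hfw _) (differentiableAt_const _),
    fderiv_clm_apply (hfw _) (differentiableAt_const _)]
  simpa using (hw.contDiffAt.isSymmSndFDerivAt (by simp)).eq _ _

variable {p : NNReal} {μ : Measure ℝ} {ν : Measure E3} [SFinite ν]

theorem bochnerSobolevNorm_le_eLpNorm_add_sum_Dx (hp : 1 ≤ p)
    (hw : ContDiff ℝ 1 (Function.uncurry w)) :
    bochnerSobolevNorm p μ ν w ≤ eLpNorm (fun z : ℝ × E3 => w z.1 z.2) p (μ.prod ν) +
      ∑ j, eLpNorm (fun z : ℝ × E3 => Dx (w z.1) j z.2) p (μ.prod ν) := by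
  refine (bochnerSobolevNorm_le_eLpNorm_prod hp hw).trans ?_
  gcongr
  have hDx (j : Fin 3) : Continuous fun z : ℝ × E3 => Dx (w z.1) j z.2 :=
    (contDiff_uncurry_Dx (n := 0) hw (zero_add 1).le j).continuous
  calc eLpNorm (fun z : ℝ × E3 => fderiv ℝ (w z.1) z.2) p (μ.prod ν)
      ≤ eLpNorm (∑ j, fun z : ℝ × E3 => ‖Dx (w z.1) j z.2‖ₑ) p (μ.prod ν) :=
        eLpNorm_mono_enorm fun z => by
          simpa using enorm_fderiv_le_sum_enorm_Dx (w z.1) z.2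
    _ ≤ ∑ j, eLpNorm (fun z : ℝ × E3 => ‖Dx (w z.1) j z.2‖ₑ) p (μ.prod ν) :=
        eLpNorm_sum_le (fun j _ => (hDx j).enorm.aestronglyMeasurable)
          (ENNReal.one_le_coe_iff.2 hp)
    _ = _ := by simp only [eLpNorm_enorm]

theorem bochnerSobolevNorm_Dx_le_XnormE (hp : 1 ≤ p) (hw : ContDiff ℝ 2 (Function.uncurry w))
    (i : Fin 3) :
    bochnerSobolevNorm p μ ν (fun t x => Dx (w t) i x) ≤ XnormE p (μ.prod ν) w := by
  have hDx := contDiff_uncurry_Dx (n := 1) hw one_add_one_eq_two.le i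
  refine (bochnerSobolevNorm_le_eLpNorm_add_sum_Dx hp hDx).trans ?_
  refine le_add_right (le_add_right (le_add_right (add_le_add (le_add_left ?_) ?_)))
  · exact Finset.single_le_sum (f := fun i => eLpNorm (fun z : ℝ × E3 => Dx (w z.1) i z.2) p _)
      (fun _ _ => zero_le) (Finset.mem_univ i)
  · exact Finset.single_le_sum
      (f := fun i => ∑ j, eLpNorm (fun z : ℝ × E3 => DDx (w z.1) i j z.2) p _)
      (fun _ _ => zero_le) (Finset.mem_univ i)

theorem bochnerSobolevNorm_dt_Dx_le_XnormE (hp : 1 ≤ p) (hw : ContDiff ℝ 3 (Function.uncurry w))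
    (i : Fin 3) :
    bochnerSobolevNorm p μ ν (dt fun t x => Dx (w t) i x) ≤ XnormE p (μ.prod ν) w := by
  have hDx := contDiff_uncurry_Dx (n := 2) hw two_add_one_eq_three.le i
  have hdt := contDiff_uncurry_dt (n := 1) hDx one_add_one_eq_two.le
  refine (bochnerSobolevNorm_le_eLpNorm_add_sum_Dx hp hdt).trans ?_
  simp only [Dx_dt hDx]
  refine add_le_add (le_add_left ?_) ?_
  · exact Finset.single_le_sum
      (f := fun i => eLpNorm (fun z : ℝ × E3 => dt (fun s y => Dx (w s) i y) z.1 z.2) p _)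
      (fun _ _ => zero_le) (Finset.mem_univ i)
  · exact Finset.single_le_sum
      (f := fun i => ∑ j, eLpNorm (fun z : ℝ × E3 => dt (fun s y => DDx (w s) i j y) z.1 z.2) p _)
      (fun _ _ => zero_le) (Finset.mem_univ i)

end SpaceTime

theorem stmt17_general {T : ℝ} (hT : 0 < T) {p : ℝ} (hp : 3 / 2 < p) {Ω : Set E3}
    (hΩ : MeasurableSet Ω) (hcone : ConeCondition Ω) :
    ∃ c : ℝ≥0∞, c ≠ ⊤ ∧ ∀ u v : ℝ → E3 → ℝ,
      ContDiff ℝ 3 (Function.uncurry u) → ContDiff ℝ 3 (Function.uncurry v) →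
      eLpNorm (fun z : ℝ × E3 =>
            ∑ i : Fin 3, Dx (v z.1) i z.2 * dt (fun s y => Dx (u s) i y) z.1 z.2)
          (ENNReal.ofReal p) (μT T Ω) ≤
        c * XnormE (ENNReal.ofReal p) (μT T Ω) v * XnormE (ENNReal.ofReal p) (μT T Ω) u := by
  lift p to NNReal using by linarith
  have hp1 : 1 ≤ p := by
    rw [← NNReal.coe_le_coe]
    push_cast
    linarith
  simp only [ENNReal.ofReal_coe_nnreal]
  obtain ⟨C, hC⟩ := exists_eLpNorm_smul_le_bochnerSobolevNorm (p := p) ℝ volume hT hΩ hcone hp1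
    (by rw [finrank_euclideanSpace_fin]; push_cast; linarith)
  refine ⟨6 * C, ENNReal.mul_ne_top (by simp) ENNReal.coe_ne_top, fun u v hu hv => ?_⟩
  set X := XnormE p (μT T Ω)
  have hDv (i : Fin 3) := contDiff_uncurry_Dx (n := 2) hv two_add_one_eq_three.le i
  have hDu (i : Fin 3) := contDiff_uncurry_Dx (n := 2) hu two_add_one_eq_three.le i
  have hdtDv (i : Fin 3) := contDiff_uncurry_dt (n := 1) (hDv i) one_add_one_eq_two.le
  have hdtDu (i : Fin 3) := contDiff_uncurry_dt (n := 1) (hDu i) one_add_one_eq_two.le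
  have hDv' (i : Fin 3) := (hDv i).of_le one_le_two
  have hterm (i : Fin 3) :
      eLpNorm (fun z : ℝ × E3 => Dx (v z.1) i z.2 * dt (fun s y => Dx (u s) i y) z.1 z.2)
        p (μT T Ω) ≤ C * (X v + X v) * X u := by
    refine (hC _ _ _ (hDv' i) (hdtDv i) (hasDerivAt_dt (hDv' i)) (hdtDu i)).trans ?_
    gcongr
    · exact bochnerSobolevNorm_Dx_le_XnormE hp1 (hv.of_le (by norm_num)) i
    · exact bochnerSobolevNorm_dt_Dx_le_XnormE hp1 hv i
    · exact bochnerSobolevNorm_dt_Dx_le_XnormE hp1 hu i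
  calc _ ≤ ∑ i : Fin 3, eLpNorm
        (fun z : ℝ × E3 => Dx (v z.1) i z.2 * dt (fun s y => Dx (u s) i y) z.1 z.2)
        p (μT T Ω) := by
        rw [← Finset.sum_fn]
        refine eLpNorm_sum_le (fun i _ => ?_) (ENNReal.one_le_coe_iff.2 hp1)
        exact ((hDv i).continuous.mul (hdtDu i).continuous).aestronglyMeasurable
    _ ≤ ∑ _i : Fin 3, C * (X v + X v) * X u := Finset.sum_le_sum fun i _ => hterm i
    _ = _ := by
        rw [Finset.sum_const, Finset.card_univ, Fintype.card_fin, nsmul_eq_mul]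
        push_cast
        ring

/-- For `p ∈ (5/2, 3)`, `T > 0` and `Ω` the whole space, a half-space or a
bounded `C^{1,1}` domain, there is `c` such that for all purely periodic `u, v` in the solution
space `X`: `‖∇v · ∂ₜ∇u‖_{L^p(𝕋×Ω)} ≤ c‖v‖_X ‖u‖_X`. -/
theorem stmt17 (T : ℝ) (hT : 0 < T) (p : ℝ) (hp1 : 5 / 2 < p) (hp2 : p < 3) (Ω : Set E3)
    (hΩ : Ω = Set.univ ∨ Ω = {x : E3 | 0 < x 2} ∨ IsC11Domain Ω) :
    ∃ c : ℝ≥0∞, c ≠ ⊤ ∧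
      ∀ u v : ℝ → E3 → ℝ,
        ContDiff ℝ (⊤ : ℕ∞) (Function.uncurry u) →
        ContDiff ℝ (⊤ : ℕ∞) (Function.uncurry v) →
        (∀ t x, u (t + T) x = u t x) → (∀ t x, v (t + T) x = v t x) →
        (∀ x, (∫ s in (0 : ℝ)..T, u s x) = 0) → (∀ x, (∫ s in (0 : ℝ)..T, v s x) = 0) →
        eLpNorm (fun z : ℝ × E3 =>
              ∑ i : Fin 3, Dx (v z.1) i z.2 * dt (fun s y => Dx (u s) i y) z.1 z.2)
            (ENNReal.ofReal p) (μT T Ω) ≤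
          c * XnormE (ENNReal.ofReal p) (μT T Ω) v * XnormE (ENNReal.ofReal p) (μT T Ω) u := by
  obtain ⟨hopen, hcone⟩ := isOpen_and_coneCondition hΩ
  obtain ⟨c, hc, hbound⟩ := stmt17_general (p := p) hT (by linarith) hopen.measurableSet hcone
  have hsmooth : (3 : WithTop ℕ∞) ≤ (⊤ : ℕ∞) := WithTop.coe_le_coe.2 le_top
  exact ⟨c, hc, fun u v hu hv _ _ _ _ => hbound u v (hu.of_le hsmooth) (hv.of_le hsmooth)⟩
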